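/- Let M ∈ Ω̂₂ and let F : Ĥ₂ → Ĥ₂ be the induced map in real coordinates: writing Z = [[x₁+iy₁, x₂+iy₂],[x₂+iy₂, x₁+iy₁]] and M<Z> = [[u₁+iv₁, u₂+iv₂],[u₂+iv₂, u₁+iv₁]], F sends (x₁,x₂,y₁,y₂) to (u₁,u₂,v₁,v₂). Then at every point of Ĥ₂ the Jacobian determinant of F equals (v₁+v₂)²(v₁−v₂)²/((y₁+y₂)²(y₁−y₂)²). Consequently the symplectic volume element dv = 4/((y₁+y₂)²(y₁−y₂)²) dx₁ dx₂ dy₁ dy₂ on Ĥ₂ is invariant under the action of every element of Ω̂₂. -/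

import Mathlib

open Matrix Complex

noncomputable section

abbrev Mat2 : Type := Matrix (Fin 2) (Fin 2) ℂ
abbrev Mat2R : Type := Matrix (Fin 2) (Fin 2) ℝ
abbrev Mat4 : Type := Matrix (Fin 2 ⊕ Fin 2) (Fin 2 ⊕ Fin 2) ℝ

/-- `q = [[0,1],[1,0]]`. -/
def qR : Mat2R := !![0, 1; 1, 0]

/-- `J = [[0, I₂],[−I₂, 0]]` (4×4). -/
def Jmat : Mat4 := Matrix.fromBlocks 0 1 (-1) 0

/-- `Q = diag(q, q)` (4×4). -/
def Qmat : Mat4 := Matrix.fromBlocks qR 0 0 qR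

/-- `Ω₂ = Sp(4,ℝ) = {M : ᵗM J M = J}`. -/
def Omega2 : Set Mat4 := {M | Mᵀ * Jmat * M = Jmat}

/-- The new Siegel upper half space `Ĥ₂`: bi-symmetric `Z = [[τ,z],[z,τ]]` with `Im τ > |Im z|`. -/
def Hhat : Set Mat2 :=
  {Z | Z 1 1 = Z 0 0 ∧ Z 1 0 = Z 0 1 ∧ |(Z 0 1).im| < (Z 0 0).im}

/-- The action `M<Z> = (AZ+B)(CZ+D)⁻¹` of a real 4×4 matrix in 2×2 blocks on `Z ∈ ℂ^{2×2}`. -/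
def act (M : Mat4) (Z : Mat2) : Mat2 :=
  (M.toBlocks₁₁.map Complex.ofReal * Z + M.toBlocks₁₂.map Complex.ofReal) *
    (M.toBlocks₂₁.map Complex.ofReal * Z + M.toBlocks₂₂.map Complex.ofReal)⁻¹

/-- `Ω̂₂ = {M ∈ Ω₂ : M<Z> ∈ Ĥ₂ for all Z ∈ Ĥ₂}`. -/
def OmegaHat : Set Mat4 := {M | M ∈ Omega2 ∧ ∀ Z ∈ Hhat, act M Z ∈ Hhat}

/-- The point of `Ĥ₂` with real coordinates `p = (x₁, x₂, y₁, y₂)`. -/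
def ptZ (p : Fin 4 → ℝ) : Mat2 :=
  !![(p 0 : ℂ) + (p 2 : ℂ) * Complex.I, (p 1 : ℂ) + (p 3 : ℂ) * Complex.I;
     (p 1 : ℂ) + (p 3 : ℂ) * Complex.I, (p 0 : ℂ) + (p 2 : ℂ) * Complex.I]

/-- `Ĥ₂` in the real coordinates `(x₁, x₂, y₁, y₂)`: the condition `y₁ > |y₂|`. -/
def Hhat4 : Set (Fin 4 → ℝ) := {p | |p 3| < p 2}

/-- The map induced by `M` on `Ĥ₂` in the real coordinates `(x₁, x₂, y₁, y₂)`,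
sending them to `(u₁, u₂, v₁, v₂)`. -/
def Fmap (M : Mat4) (p : Fin 4 → ℝ) : Fin 4 → ℝ :=
  ![(act M (ptZ p) 0 0).re, (act M (ptZ p) 0 1).re,
    (act M (ptZ p) 0 0).im, (act M (ptZ p) 0 1).im]

/-!
For `M = [[A, B], [C, D]]` symplectic, `Z` symmetric and `Z'` arbitrary,
`M<Z'> - M<Z> = (CZ + D)⁻ᵀ (Z' - Z) (CZ' + D)⁻¹`. Letting `Z'` tend to `Z`, the derivative of the
action at `Z` is `H ↦ Kᵀ H K` with `K = (CZ + D)⁻¹`; taking `Z'` to be the complex conjugate of `Z`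
when `M` is real, `det Im M<Z> = |det K|² det Im Z`. If `M` preserves `Ĥ₂`, then `H ↦ Kᵀ H K`
preserves the bi-symmetric matrices, on which `det` is a nondegenerate binary quadratic form. This
form is multiplied by `(det K)²`, so the complex Jacobian squares to `(det K)⁴`, and the real
Jacobian is `|det K|⁴ = (det Im M<Z> / det Im Z)²`.
-/

/-- The numerator `AZ + B` of the fractional linear action of `M = [[A, B], [C, D]]`. -/
def moebiusNum {l R : Type*} [Fintype l] [CommRing R] (M : Matrix (l ⊕ l) (l ⊕ l) R)
    (Z : Matrix l l R) : Matrix l l R :=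
  M.toBlocks₁₁ * Z + M.toBlocks₁₂

/-- The denominator `CZ + D` of the fractional linear action of `M = [[A, B], [C, D]]`. -/
def moebiusDenom {l R : Type*} [Fintype l] [CommRing R] (M : Matrix (l ⊕ l) (l ⊕ l) R)
    (Z : Matrix l l R) : Matrix l l R :=
  M.toBlocks₂₁ * Z + M.toBlocks₂₂

/-- The fractional linear action `M<Z> = (AZ + B)(CZ + D)⁻¹` over an arbitrary commutative ring.
It takes the junk value `0` where `CZ + D` is not invertible. -/
def moebius {l R : Type*} [Fintype l] [DecidableEq l] [CommRing R] (M : Matrix (l ⊕ l) (l ⊕ l) R)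
    (Z : Matrix l l R) : Matrix l l R :=
  moebiusNum M Z * (moebiusDenom M Z)⁻¹

section Moebius

variable {l R S : Type*} [Fintype l] [CommRing R] [CommRing S]

lemma moebiusNum_map (f : R →+* S) (M : Matrix (l ⊕ l) (l ⊕ l) R) (Z : Matrix l l R) :
    moebiusNum (M.map f) (Z.map f) = (moebiusNum M Z).map f := by
  simp only [moebiusNum, Matrix.map_add _ (map_add f), Matrix.map_mul]
  rfl

lemma moebiusDenom_map (f : R →+* S) (M : Matrix (l ⊕ l) (l ⊕ l) R) (Z : Matrix l l R) :
    moebiusDenom (M.map f) (Z.map f) = (moebiusDenom M Z).map f := by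
  simp only [moebiusDenom, Matrix.map_add _ (map_add f), Matrix.map_mul]
  rfl

lemma continuous_moebiusDenom [TopologicalSpace R] [IsTopologicalRing R]
    (M : Matrix (l ⊕ l) (l ⊕ l) R) : Continuous (moebiusDenom M) :=
  (continuous_const.mul continuous_id).add continuous_const

variable [DecidableEq l] {M : Matrix (l ⊕ l) (l ⊕ l) R} {Z Z' : Matrix l l R}

lemma nonsing_inv_map (f : R →+* S) {X : Matrix l l R} (hX : IsUnit X.det) :
    (X.map f)⁻¹ = X⁻¹.map f := by
  refine inv_eq_right_inv ?_
  rw [← Matrix.map_mul, mul_nonsing_inv _ hX, Matrix.map_one _ (map_zero f) (map_one f)]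

lemma moebius_map (f : R →+* S) (hdenom : IsUnit (moebiusDenom M Z).det) :
    moebius (M.map f) (Z.map f) = (moebius M Z).map f := by
  rw [moebius, moebius, moebiusNum_map, moebiusDenom_map, nonsing_inv_map f hdenom, Matrix.map_mul]

lemma mul_fromRows_one (M : Matrix (l ⊕ l) (l ⊕ l) R) (Z : Matrix l l R) :
    M * fromRows Z (1 : Matrix l l R) = fromRows (moebiusNum M Z) (moebiusDenom M Z) := by
  conv_lhs => rw [← fromBlocks_toBlocks M]
  simp only [fromBlocks_mul_fromRows, Matrix.mul_one, moebiusNum, moebiusDenom]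

lemma transpose_fromRows_mul_J_mul_fromRows (X Y X' Y' : Matrix l l R) :
    (fromRows X Y)ᵀ * J l R * fromRows X' Y' = Yᵀ * X' - Xᵀ * Y' := by
  simp [J, transpose_fromRows, fromCols_mul_fromBlocks, fromCols_mul_fromRows, sub_eq_add_neg]

lemma moebiusDenom_transpose_mul_num_sub (hM : M ∈ symplecticGroup l R) (Z Z' : Matrix l l R) :
    (moebiusDenom M Z)ᵀ * moebiusNum M Z' - (moebiusNum M Z)ᵀ * moebiusDenom M Z' = Z' - Zᵀ := by
  calc
    _ = (M * fromRows Z (1 : Matrix l l R))ᵀ * J l R * (M * fromRows Z' (1 : Matrix l l R)) := by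
      rw [mul_fromRows_one, mul_fromRows_one, transpose_fromRows_mul_J_mul_fromRows]
    _ = (fromRows Z (1 : Matrix l l R))ᵀ * (Mᵀ * J l R * M) * fromRows Z' (1 : Matrix l l R) := by
      simp only [transpose_mul, Matrix.mul_assoc]
    _ = Z' - Zᵀ := by
      rw [SymplecticGroup.mem_iff'.mp hM, transpose_fromRows_mul_J_mul_fromRows,
        transpose_one, Matrix.one_mul, Matrix.mul_one]

lemma moebius_eq_transpose_inv_mul (hM : M ∈ symplecticGroup l R) (hZ : Z.IsSymm)
    (hdenom : IsUnit (moebiusDenom M Z).det) :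
    moebius M Z = (moebiusDenom M Z)ᵀ⁻¹ * (moebiusNum M Z)ᵀ := by
  have hcross := moebiusDenom_transpose_mul_num_sub hM Z Z
  rw [hZ.eq, sub_self, sub_eq_zero] at hcross
  calc
    moebius M Z = (moebiusDenom M Z)ᵀ⁻¹ * ((moebiusDenom M Z)ᵀ * moebiusNum M Z) *
        (moebiusDenom M Z)⁻¹ := by
      rw [nonsing_inv_mul_cancel_left _ _ (isUnit_det_transpose _ hdenom), moebius]
    _ = (moebiusDenom M Z)ᵀ⁻¹ * (moebiusNum M Z)ᵀ := by
      rw [hcross, ← Matrix.mul_assoc, mul_nonsing_inv_cancel_right _ _ hdenom]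

lemma moebius_sub_moebius (hM : M ∈ symplecticGroup l R) (hZ : Z.IsSymm)
    (hdenom : IsUnit (moebiusDenom M Z).det) (hdenom' : IsUnit (moebiusDenom M Z').det) :
    moebius M Z' - moebius M Z =
      (moebiusDenom M Z)ᵀ⁻¹ * (Z' - Z) * (moebiusDenom M Z')⁻¹ := by
  have hcross := moebiusDenom_transpose_mul_num_sub hM Z Z'
  rw [hZ.eq] at hcross
  rw [← hcross, Matrix.mul_sub, Matrix.sub_mul,
    nonsing_inv_mul_cancel_left _ _ (isUnit_det_transpose _ hdenom), ← Matrix.mul_assoc,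
    mul_nonsing_inv_cancel_right _ _ hdenom', ← moebius_eq_transpose_inv_mul hM hZ hdenom, moebius]

end Moebius

lemma map_conj_sub_self {m n : Type*} (Z : Matrix m n ℂ) :
    Z.map (starRingEnd ℂ) - Z = (-2 * I) • (Z.map im).map ofRealHom := by
  ext i j
  have hentry := sub_conj (Z i j)
  push_cast at hentry
  simp only [Matrix.sub_apply, Matrix.smul_apply, map_apply, smul_eq_mul, ofRealHom_eq_coe]
  linear_combination -hentry

section ImaginaryPart

variable {l : Type*} [Fintype l] [DecidableEq l] {M : Matrix (l ⊕ l) (l ⊕ l) ℂ} {Z : Matrix l l ℂ}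

lemma im_moebius (hM : M ∈ symplecticGroup l ℂ) (hreal : M.map (starRingEnd ℂ) = M)
    (hZ : Z.IsSymm) (hdenom : IsUnit (moebiusDenom M Z).det) :
    ((moebius M Z).map im).map ofRealHom =
      (moebiusDenom M Z)ᵀ⁻¹ * (Z.map im).map ofRealHom *
        (moebiusDenom M Z)⁻¹.map (starRingEnd ℂ) := by
  have hdenom_conj := moebiusDenom_map (starRingEnd ℂ) M Z
  have hmoebius_conj := moebius_map (starRingEnd ℂ) hdenom
  rw [hreal] at hdenom_conj hmoebius_conj
  have hunit_conj : IsUnit (moebiusDenom M (Z.map (starRingEnd ℂ))).det := by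
    rw [hdenom_conj, ← RingHom.mapMatrix_apply, ← RingHom.map_det]
    exact hdenom.map (starRingEnd ℂ)
  have hdiff := moebius_sub_moebius hM hZ hdenom hunit_conj
  rw [hmoebius_conj, hdenom_conj, nonsing_inv_map _ hdenom, map_conj_sub_self, map_conj_sub_self,
    Matrix.mul_smul, Matrix.smul_mul] at hdiff
  exact smul_right_injective _ (by simp) hdiff

lemma det_im_moebius (hM : M ∈ symplecticGroup l ℂ) (hreal : M.map (starRingEnd ℂ) = M)
    (hZ : Z.IsSymm) (hdenom : IsUnit (moebiusDenom M Z).det) :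
    ((moebius M Z).map im).det = normSq (moebiusDenom M Z)⁻¹.det * (Z.map im).det := by
  have hdet := congrArg Matrix.det (im_moebius hM hreal hZ hdenom)
  simp only [det_mul, ← RingHom.mapMatrix_apply, ← RingHom.map_det, ← transpose_nonsing_inv,
    det_transpose] at hdet
  apply ofReal_injective
  rw [ofReal_mul, normSq_eq_conj_mul_self]
  linear_combination hdet

end ImaginaryPart

lemma hasFDerivAt_of_sub_eq_continuousAt_apply {𝕜 E F : Type*} [NontriviallyNormedField 𝕜]
    [NormedAddCommGroup E] [NormedSpace 𝕜 E] [NormedAddCommGroup F] [NormedSpace 𝕜 F]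
    {f : E → F} {L : E → E →L[𝕜] F} {x : E} (hL : ContinuousAt L x)
    (hf : ∀ᶠ y in nhds x, f y - f x = L y (y - x)) : HasFDerivAt f (L x) x := by
  have hbound : (fun y => (L y - L x) (y - x)) =O[nhds x] fun y => ‖L y - L x‖ * ‖y - x‖ :=
    .of_norm_le fun y => (L y - L x).le_opNorm (y - x)
  have hsmall : (fun y => ‖L y - L x‖) =o[nhds x] fun _ => (1 : ℝ) :=
    (Asymptotics.isLittleO_one_iff ℝ).mpr (tendsto_iff_norm_sub_tendsto_zero.mp hL)
  have hrest : (fun y => (L y - L x) (y - x)) =o[nhds x] fun y => y - x := by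
    simpa using hbound.trans_isLittleO
      (hsmall.mul_isBigO (Asymptotics.isBigO_refl (fun y => ‖y - x‖) _))
  refine .of_isLittleO (hrest.congr' ?_ .rfl)
  filter_upwards [hf] with y hy
  rw [hy, _root_.sub_apply]

section Derivative

variable {l 𝕜 : Type*} [Fintype l] [DecidableEq l] [NontriviallyNormedField 𝕜]
  {M : Matrix (l ⊕ l) (l ⊕ l) 𝕜} {Z : Matrix l l 𝕜}

lemma continuousAt_moebiusDenom_inv (hdenom : IsUnit (moebiusDenom M Z).det) :
    ContinuousAt (fun Z' => (moebiusDenom M Z')⁻¹) Z := by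
  refine (continuousAt_matrix_inv _ ?_).comp (continuous_moebiusDenom M).continuousAt
  rw [Ring.inverse_eq_inv']
  exact continuousAt_inv₀ hdenom.ne_zero

lemma eventually_isUnit_det_moebiusDenom (hdenom : IsUnit (moebiusDenom M Z).det) :
    ∀ᶠ Z' in nhds Z, IsUnit (moebiusDenom M Z').det := by
  simp only [isUnit_iff_ne_zero] at hdenom ⊢
  exact (continuous_moebiusDenom M).matrix_det.continuousAt.eventually_ne hdenom

open scoped Matrix.Norms.Operator in
lemma hasFDerivAt_moebius (hM : M ∈ symplecticGroup l 𝕜) (hZ : Z.IsSymm)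
    (hdenom : IsUnit (moebiusDenom M Z).det) :
    HasFDerivAt (moebius M)
      (ContinuousLinearMap.mulLeftRight 𝕜 (Matrix l l 𝕜)
        (moebiusDenom M Z)ᵀ⁻¹ (moebiusDenom M Z)⁻¹) Z := by
  refine hasFDerivAt_of_sub_eq_continuousAt_apply
    (L := fun Z' => ContinuousLinearMap.mulLeftRight 𝕜 (Matrix l l 𝕜)
        (moebiusDenom M Z)ᵀ⁻¹ (moebiusDenom M Z')⁻¹) ?_ ?_
  · exact (ContinuousLinearMap.continuous _).continuousAt.comp
      (continuousAt_moebiusDenom_inv hdenom)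
  · filter_upwards [eventually_isUnit_det_moebiusDenom hdenom] with Z' hdenom'
    exact moebius_sub_moebius hM hZ hdenom hdenom'

end Derivative

lemma sq_det_of_comp_eq_smul {ι R V : Type*} [Fintype ι] [DecidableEq ι] [CommRing R]
    [Invertible (2 : R)] [AddCommGroup V] [Module R V] (b : Module.Basis ι R V)
    {Q : QuadraticForm R V} (hQ : IsUnit (Q.discr b)) {f : V →ₗ[R] V} {c : R}
    (hf : Q.comp f = c • Q) : LinearMap.det f ^ 2 = c ^ Fintype.card ι := by
  have hdiscr := QuadraticForm.discr_comp (b := b) b Q f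
  rw [hf, QuadraticForm.discr_smul, LinearMap.det_toMatrix, ← sq] at hdiscr
  exact (hQ.mul_right_cancel hdiscr).symm

/-- The bi-symmetric matrix `[[τ, z], [z, τ]]` with first row `w = (τ, z)`; over `ℂ` this is a
linear chart of the space containing `Ĥ₂`. -/
def bisymm (R : Type*) [CommRing R] : (Fin 2 → R) →ₗ[R] Matrix (Fin 2) (Fin 2) R where
  toFun w := !![w 0, w 1; w 1, w 0]
  map_add' v w := by ext i j; fin_cases i <;> fin_cases j <;> rfl
  map_smul' c w := by ext i j; fin_cases i <;> fin_cases j <;> rfl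

/-- The quadratic form `τ² - z²`, the determinant of a bi-symmetric matrix. -/
def bisymmDet (R : Type*) [CommRing R] : QuadraticForm R (Fin 2 → R) :=
  QuadraticMap.weightedSumSquares R ![(1 : R), -1]

section Bisymmetric

variable {R : Type*} [CommRing R]

lemma bisymm_apply (w : Fin 2 → R) : bisymm R w = !![w 0, w 1; w 1, w 0] := rfl

lemma isSymm_bisymm (w : Fin 2 → R) : (bisymm R w).IsSymm := by
  ext i j; fin_cases i <;> fin_cases j <;> rfl

lemma bisymmDet_apply (w : Fin 2 → R) : bisymmDet R w = w 0 ^ 2 - w 1 ^ 2 := by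
  simp [bisymmDet, QuadraticMap.weightedSumSquares_apply, sq, sub_eq_add_neg]

lemma det_bisymm (w : Fin 2 → R) : (bisymm R w).det = bisymmDet R w := by
  rw [bisymm_apply, det_fin_two_of, bisymmDet_apply, sq, sq]

lemma associated_bisymmDet_apply [Invertible (2 : R)] (v w : Fin 2 → R) :
    QuadraticMap.associated (bisymmDet R) v w = v 0 * w 0 - v 1 * w 1 := by
  have hpolar : bisymmDet R (v + w) - bisymmDet R v - bisymmDet R w =
      2 * (v 0 * w 0 - v 1 * w 1) := by
    simp only [bisymmDet_apply, Pi.add_apply]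
    ring
  rw [QuadraticMap.associated_apply, hpolar, Module.End.smul_def,
    QuadraticMap.half_moduleEnd_apply_eq_half_smul, smul_eq_mul, invOf_mul_cancel_left]

lemma isUnit_discr_bisymmDet [Invertible (2 : R)] :
    IsUnit ((bisymmDet R).discr (Pi.basisFun R (Fin 2))) := by
  have hdiag : (bisymmDet R).toMatrix' = diagonal ![1, -1] := by
    ext i j
    rw [QuadraticForm.toMatrix', LinearMap.toMatrix₂'_apply, associated_bisymmDet_apply]
    fin_cases i <;> fin_cases j <;> simp
  simp [QuadraticForm.discr_eq_discr', QuadraticForm.discr', hdiag]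

lemma sq_det_of_bisymm_eq_transpose_mul_mul [Invertible (2 : R)] {f : (Fin 2 → R) →ₗ[R] (Fin 2 → R)}
    {K : Matrix (Fin 2) (Fin 2) R} (hf : ∀ w, bisymm R (f w) = Kᵀ * bisymm R w * K) :
    LinearMap.det f ^ 2 = (K.det ^ 2) ^ 2 := by
  refine sq_det_of_comp_eq_smul _ isUnit_discr_bisymmDet (QuadraticMap.ext fun w => ?_)
  rw [QuadraticMap.comp_apply, _root_.smul_apply, ← det_bisymm, ← det_bisymm, hf, det_mul,
    det_mul, det_transpose, smul_eq_mul]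
  ring

end Bisymmetric

section BisymmetricDerivative

open scoped Matrix.Norms.Operator

variable {M : Matrix (Fin 2 ⊕ Fin 2) (Fin 2 ⊕ Fin 2) ℂ} {w : Fin 2 → ℂ}

lemma exists_hasFDerivAt_moebius_bisymm (hM : M ∈ symplecticGroup (Fin 2) ℂ)
    (hdenom : IsUnit (moebiusDenom M (bisymm ℂ w)).det)
    (hbisymm : ∀ᶠ w' in nhds w, bisymm ℂ (moebius M (bisymm ℂ w') 0) = moebius M (bisymm ℂ w')) :
    ∃ φ : (Fin 2 → ℂ) →L[ℂ] (Fin 2 → ℂ),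
      HasFDerivAt (fun w' => moebius M (bisymm ℂ w') 0) φ w ∧
      ∀ h, bisymm ℂ (φ h) = (moebiusDenom M (bisymm ℂ w))⁻¹ᵀ * bisymm ℂ h *
        (moebiusDenom M (bisymm ℂ w))⁻¹ := by
  set K := (moebiusDenom M (bisymm ℂ w))⁻¹
  have hmoebius := (hasFDerivAt_moebius hM (isSymm_bisymm w) hdenom).comp w
    (bisymm ℂ).toContinuousLinearMap.hasFDerivAt
  have hrow := ((LinearMap.pi (entryLinearMap ℂ ℂ (0 : Fin 2))).toContinuousLinearMap.hasFDerivAt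
    (x := moebius M (bisymm ℂ w))).comp w hmoebius
  refine ⟨_, hrow, fun h => ?_⟩
  have hbisymm_row := (bisymm ℂ).toContinuousLinearMap.hasFDerivAt.comp w hrow
  have hderiv := hbisymm_row.unique (hmoebius.congr_of_eventuallyEq hbisymm)
  rw [transpose_nonsing_inv]
  exact DFunLike.congr_fun hderiv h

end BisymmetricDerivative

section RealCoordinates

/-- The identification of `(x₁, x₂, y₁, y₂)` with `(x₁ + i y₁, x₂ + i y₂)`. -/
def complexCoords : (Fin 4 → ℝ) ≃ₗ[ℝ] (Fin 2 → ℂ) where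
  toFun p := ![p 0 + p 2 * I, p 1 + p 3 * I]
  invFun w := ![(w 0).re, (w 1).re, (w 0).im, (w 1).im]
  map_add' p q := by ext i; fin_cases i <;> simp [add_mul, add_add_add_comm]
  map_smul' c p := by ext i; fin_cases i <;> simp [mul_assoc]
  left_inv p := by ext i; fin_cases i <;> simp
  right_inv w := by ext i; fin_cases i <;> simp

lemma bisymm_complexCoords (p : Fin 4 → ℝ) : bisymm ℂ (complexCoords p) = ptZ p := rfl

lemma Fmap_eq_conj_complexCoords (M : Mat4) (p : Fin 4 → ℝ) :
    Fmap M p = complexCoords.symm (moebius (M.map ofReal) (bisymm ℂ (complexCoords p)) 0) := rfl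

lemma det_conj_restrictScalars {V W : Type*} [AddCommGroup V] [Module ℝ V] [AddCommGroup W]
    [Module ℂ W] (e : V ≃ₗ[ℝ] W) (f : W →ₗ[ℂ] W) :
    LinearMap.det (e.symm.toLinearMap ∘ₗ f.restrictScalars ℝ ∘ₗ e.toLinearMap) =
      normSq (LinearMap.det f) := by
  have hconj := LinearMap.det_conj (f.restrictScalars ℝ) e.symm
  rw [LinearEquiv.symm_symm] at hconj
  rw [hconj, LinearMap.det_restrictScalars, Algebra.norm_complex_apply]

lemma mem_Omega2_iff {M : Mat4} : M ∈ Omega2 ↔ M ∈ symplecticGroup (Fin 2) ℝ := by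
  have hJ : Jmat = -J (Fin 2) ℝ := by simp [Jmat, J, fromBlocks_neg]
  rw [SymplecticGroup.mem_iff', Omega2, Set.mem_ofPred_eq, hJ, Matrix.mul_neg, Matrix.neg_mul,
    neg_inj]

lemma mem_symplecticGroup_of_mem_OmegaHat {M : Mat4} (hM : M ∈ OmegaHat) :
    M.map ofReal ∈ symplecticGroup (Fin 2) ℂ :=
  SymplecticGroup.map_mem (mem_Omega2_iff.mp hM.1) ofRealHom

lemma isUnit_det_moebiusDenom {M : Mat4} (hM : M ∈ OmegaHat) {Z : Mat2} (hZ : Z ∈ Hhat) :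
    IsUnit (moebiusDenom (M.map ofReal) Z).det := by
  -- A singular denominator would give the junk value `M<Z> = 0`, which is not in `Ĥ₂`.
  by_contra hdenom
  have hact : act M Z = 0 :=
    (congrArg _ (nonsing_inv_apply_not_isUnit _ hdenom)).trans (Matrix.mul_zero _)
  have himage := hM.2 Z hZ
  simp [hact, Hhat] at himage

lemma isOpen_Hhat4 : IsOpen Hhat4 :=
  isOpen_lt (by fun_prop) (by fun_prop)

lemma ptZ_mem_Hhat {p : Fin 4 → ℝ} (hp : p ∈ Hhat4) : ptZ p ∈ Hhat := by
  simpa [ptZ, Hhat, Hhat4] using hp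

lemma isSymm_ptZ (p : Fin 4 → ℝ) : (ptZ p).IsSymm := isSymm_bisymm (complexCoords p)

lemma det_im_ptZ (p : Fin 4 → ℝ) : ((ptZ p).map im).det = p 2 ^ 2 - p 3 ^ 2 := by
  simp [ptZ, det_fin_two, sq]

lemma bisymm_row_of_mem_Hhat {Z : Mat2} (hZ : Z ∈ Hhat) : bisymm ℂ (Z 0) = Z := by
  ext i j
  fin_cases i <;> fin_cases j <;> simp [bisymm_apply, hZ.1, hZ.2.1]

variable {M : Mat4} {p : Fin 4 → ℝ}

lemma ptZ_Fmap (hM : M ∈ OmegaHat) (hp : p ∈ Hhat4) :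
    ptZ (Fmap M p) = moebius (M.map ofReal) (ptZ p) := by
  rw [← bisymm_complexCoords, Fmap_eq_conj_complexCoords, LinearEquiv.apply_symm_apply]
  exact bisymm_row_of_mem_Hhat (hM.2 _ (ptZ_mem_Hhat hp))

lemma Fmap_mem_Hhat4 (hM : M ∈ OmegaHat) (hp : p ∈ Hhat4) : Fmap M p ∈ Hhat4 :=
  (hM.2 _ (ptZ_mem_Hhat hp)).2.2

lemma sq_add_mul_sq_sub_pos (hp : p ∈ Hhat4) : 0 < (p 2 + p 3) ^ 2 * (p 2 - p 3) ^ 2 := by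
  obtain ⟨hneg, hpos⟩ := abs_lt.mp (show |p 3| < p 2 from hp)
  exact mul_pos (pow_pos (by linarith) 2) (pow_pos (by linarith) 2)

lemma Fmap_im_sq_sub_sq (hM : M ∈ OmegaHat) (hp : p ∈ Hhat4) :
    Fmap M p 2 ^ 2 - Fmap M p 3 ^ 2 =
      normSq (moebiusDenom (M.map ofReal) (ptZ p))⁻¹.det * (p 2 ^ 2 - p 3 ^ 2) := by
  have hreal : (M.map ofReal).map (starRingEnd ℂ) = M.map ofReal := by ext; simp
  rw [← det_im_ptZ, ← det_im_ptZ, ptZ_Fmap hM hp]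
  exact det_im_moebius (mem_symplecticGroup_of_mem_OmegaHat hM) hreal (isSymm_ptZ p)
    (isUnit_det_moebiusDenom hM (ptZ_mem_Hhat hp))

lemma exists_hasFDerivAt_Fmap (hM : M ∈ OmegaHat) (hp : p ∈ Hhat4) :
    ∃ φ : (Fin 4 → ℝ) →L[ℝ] (Fin 4 → ℝ), HasFDerivAt (Fmap M) φ p ∧
      LinearMap.det (φ : (Fin 4 → ℝ) →ₗ[ℝ] (Fin 4 → ℝ)) =
        normSq (moebiusDenom (M.map ofReal) (ptZ p))⁻¹.det ^ 2 := by
  let e := complexCoords.toContinuousLinearEquiv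
  have hbisymm : ∀ᶠ w in nhds (e p), bisymm ℂ (moebius (M.map ofReal) (bisymm ℂ w) 0) =
      moebius (M.map ofReal) (bisymm ℂ w) := by
    have hmem : ∀ᶠ w in nhds (e p), e.symm w ∈ Hhat4 :=
      e.symm.continuous.continuousAt.eventually_mem
        (isOpen_Hhat4.mem_nhds (by rwa [e.symm_apply_apply]))
    filter_upwards [hmem] with w hw
    have hZ := ptZ_mem_Hhat hw
    rw [← bisymm_complexCoords, show complexCoords (e.symm w) = w from e.apply_symm_apply w] at hZ
    exact bisymm_row_of_mem_Hhat (hM.2 _ hZ)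
  obtain ⟨ψ, hψ, hψ_bisymm⟩ := exists_hasFDerivAt_moebius_bisymm
    (mem_symplecticGroup_of_mem_OmegaHat hM)
    (isUnit_det_moebiusDenom hM (ptZ_mem_Hhat hp)) hbisymm
  refine ⟨_, e.symm.hasFDerivAt.comp p ((hψ.restrictScalars ℝ).comp p e.hasFDerivAt), ?_⟩
  refine (det_conj_restrictScalars complexCoords (ψ : (Fin 2 → ℂ) →ₗ[ℂ] (Fin 2 → ℂ))).trans ?_
  have hsq := congrArg normSq (sq_det_of_bisymm_eq_transpose_mul_mul hψ_bisymm)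
  simp only [map_pow] at hsq
  exact (pow_left_inj₀ (normSq_nonneg _) (sq_nonneg _) two_ne_zero).mp hsq

end RealCoordinates

/-- the Jacobian determinant of the coordinate map induced by
`M ∈ Ω̂₂` equals `(v₁+v₂)²(v₁−v₂)²/((y₁+y₂)²(y₁−y₂)²)`; consequently the
symplectic volume element `4/((y₁+y₂)²(y₁−y₂)²) dx₁dx₂dy₁dy₂` is invariant. -/
theorem stmt_19 (M : Mat4) (hM : M ∈ OmegaHat) :
    ∀ p ∈ Hhat4, ∃ φ : (Fin 4 → ℝ) →L[ℝ] (Fin 4 → ℝ),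
      HasFDerivAt (Fmap M) φ p ∧
      LinearMap.det (φ : (Fin 4 → ℝ) →ₗ[ℝ] (Fin 4 → ℝ)) =
        ((Fmap M p 2 + Fmap M p 3) ^ 2 * (Fmap M p 2 - Fmap M p 3) ^ 2) /
          ((p 2 + p 3) ^ 2 * (p 2 - p 3) ^ 2) ∧
      (4 / ((Fmap M p 2 + Fmap M p 3) ^ 2 * (Fmap M p 2 - Fmap M p 3) ^ 2)) *
          |LinearMap.det (φ : (Fin 4 → ℝ) →ₗ[ℝ] (Fin 4 → ℝ))| =
        4 / ((p 2 + p 3) ^ 2 * (p 2 - p 3) ^ 2) := by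
  intro p hp
  obtain ⟨φ, hφ, hdet⟩ := exists_hasFDerivAt_Fmap hM hp
  have hY := sq_add_mul_sq_sub_pos hp
  have hV := sq_add_mul_sq_sub_pos (Fmap_mem_Hhat4 hM hp)
  have hJ : LinearMap.det (φ : (Fin 4 → ℝ) →ₗ[ℝ] (Fin 4 → ℝ)) =
      ((Fmap M p 2 + Fmap M p 3) ^ 2 * (Fmap M p 2 - Fmap M p 3) ^ 2) /
        ((p 2 + p 3) ^ 2 * (p 2 - p 3) ^ 2) := by
    rw [hdet, eq_div_iff hY.ne', ← mul_pow, ← mul_pow, ← mul_pow, ← sq_sub_sq, ← sq_sub_sq,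
      Fmap_im_sq_sub_sq hM hp]
  refine ⟨φ, hφ, hJ, ?_⟩
  rw [hJ, abs_of_pos (div_pos hV hY), div_mul_div_cancel₀ hV.ne']
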